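/- arXiv:2001.08825 — 2 statements merged into one kernel-verified Lean document; each statement's English description precedes it below -/
import Mathlib

section
/- Let n ∈ ℕ with n ≥ 1 and x ∈ ℝ. Then −(2·Γ(3)/(ix+1)³) · ∑_{k=0}^{n−1} C(n,k+1)·C(−3,k)·(2/(ix+1))^k = −λ_n''(x), where λ_n'' is the second derivative of λ_n. (This is the evaluation at α = 2 of the closed-form fractional Laplacian of λ_n, recovering (−Δ)^(2/2)λ_n = −λ_n''.) -/
open MeasureTheory Finset

/-- The constant `c_α = α·2^(α−1)·Γ(1/2+α/2)/(√π·Γ(1−α/2))`. -/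
noncomputable def cFrac (α : ℝ) : ℝ :=
  α * 2 ^ (α - 1) * Real.Gamma (1 / 2 + α / 2) / (Real.sqrt Real.pi * Real.Gamma (1 - α / 2))

/-- The complex Higgins function `λ_n(x) = ((ix−1)/(ix+1))^n`. -/
noncomputable def higgins (n : ℤ) (x : ℝ) : ℂ :=
  ((Complex.I * (x : ℂ) - 1) / (Complex.I * (x : ℂ) + 1)) ^ n

/-- The derivative `λ_n'`. -/
noncomputable def higgins' (n : ℤ) (x : ℝ) : ℂ := deriv (higgins n) x

/-- The complex Christov function `μ_n(x) = (ix−1)^n/(ix+1)^(n+1)`. -/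
noncomputable def christov (n : ℤ) (x : ℝ) : ℂ :=
  (Complex.I * (x : ℂ) - 1) ^ n / (Complex.I * (x : ℂ) + 1) ^ (n + 1)

/-- The derivative `μ_n'`. -/
noncomputable def christov' (n : ℤ) (x : ℝ) : ℂ := deriv (christov n) x

/-- Generalized binomial coefficient `C(z,k) = z(z−1)⋯(z−k+1)/k!` over `ℂ`. -/
noncomputable def gbinom (z : ℂ) (k : ℕ) : ℂ :=
  (∏ i ∈ Finset.range k, (z - (i : ℂ))) / (k.factorial : ℂ)

/-- Generalized binomial coefficient `C(z,k) = z(z−1)⋯(z−k+1)/k!` over `ℝ`. -/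
noncomputable def gbinomR (z : ℝ) (k : ℕ) : ℝ :=
  (∏ i ∈ Finset.range k, (z - (i : ℝ))) / (k.factorial : ℝ)

/-- Rising factorial (Pochhammer symbol) `(z)_k = z(z+1)⋯(z+k−1)` over `ℂ`. -/
noncomputable def poch (z : ℂ) (k : ℕ) : ℂ := ∏ i ∈ Finset.range k, (z + (i : ℂ))

/-- `G_α(l) = (1/(l+1))·∑_{k=0}^{l} C(l+1,k+1)·C(−1−α,k)·2^k = ₂F₁(−l, 1+α; 2; 2)`, over `ℂ`. -/
noncomputable def Gc (α : ℝ) (l : ℕ) : ℂ :=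
  (1 / ((l : ℂ) + 1)) * ∑ k ∈ Finset.range (l + 1),
    gbinom ((l : ℂ) + 1) (k + 1) * gbinom (-1 - (α : ℂ)) k * 2 ^ k

/-- `G_α(l) = (1/(l+1))·∑_{k=0}^{l} C(l+1,k+1)·C(−1−α,k)·2^k = ₂F₁(−l, 1+α; 2; 2)`, over `ℝ`. -/
noncomputable def GR (α : ℝ) (l : ℕ) : ℝ :=
  (1 / ((l : ℝ) + 1)) * ∑ k ∈ Finset.range (l + 1),
    gbinomR ((l : ℝ) + 1) (k + 1) * gbinomR (-1 - α) k * 2 ^ k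

/-- `H_α(l) = ∑_{k=0}^{l} C(l,k)·C(−1−α,k)·2^k = ₂F₁(−l, 1+α; 1; 2)`, over `ℂ`. -/
noncomputable def Hc (α : ℝ) (l : ℕ) : ℂ :=
  ∑ k ∈ Finset.range (l + 1), gbinom (l : ℂ) k * gbinom (-1 - (α : ℂ)) k * 2 ^ k

/-- `H_α(l) = ∑_{k=0}^{l} C(l,k)·C(−1−α,k)·2^k = ₂F₁(−l, 1+α; 1; 2)`, over `ℝ`. -/
noncomputable def HR (α : ℝ) (l : ℕ) : ℝ :=
  ∑ k ∈ Finset.range (l + 1), gbinomR (l : ℝ) k * gbinomR (-1 - α) k * 2 ^ k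

/-- `arccot(x) = π/2 − arctan(x) ∈ (0,π)`. -/
noncomputable def arccot (x : ℝ) : ℝ := Real.pi / 2 - Real.arctan x

/-!
Put `w = ix + 1`. Since `(ix - 1) / (ix + 1) = 1 - 2 / w`, the binomial theorem writes `λ_n` as a
polynomial in `w⁻¹`. As `w` has constant derivative `i`, differentiating `m` times multiplies
`w⁻ʲ` by `(-i)ᵐ j (j + 1) ⋯ (j + m - 1) w⁻ᵐ`. For `m ≥ 1` this kills the constant term, and at
`j = k + 1` the rising factorial is `m! (-1)ᵏ C(-1-m, k)`, which is where the second binomial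
coefficient and the factor `Γ(m + 1) = m!` come from. When `m = 2 p`, `(-i)ᵐ = (-1)ᵖ`.
-/

section GeneralizedBinomial

lemma gbinom_eq_ringChoose (z : ℂ) (k : ℕ) : gbinom z k = Ring.choose z k := by
  rw [gbinom, Ring.choose_eq_smul, ← Polynomial.aeval_eq_smeval, Polynomial.aeval_def,
    ← Polynomial.eval_map, descPochhammer_map, descPochhammer_eval_eq_prod_range, smul_eq_mul,
    div_eq_inv_mul]

lemma gbinom_natCast (n k : ℕ) : gbinom n k = n.choose k := by
  rw [gbinom_eq_ringChoose, Ring.choose_natCast]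

lemma gbinom_neg_natCast_add_one (m k : ℕ) :
    gbinom (-((m : ℂ) + 1)) k = (-1) ^ k * (m + k).choose k := by
  have hshift : (m : ℂ) + 1 + k - 1 = (m + k : ℕ) := by push_cast; ring
  rw [gbinom_eq_ringChoose, Ring.choose_neg, hshift, Ring.choose_natCast, Units.smul_def,
    zsmul_eq_mul]
  simp

end GeneralizedBinomial

section AffineInverse

variable {𝕜 𝕜' : Type*} [NontriviallyNormedField 𝕜] [NontriviallyNormedField 𝕜']
  [NormedAlgebra 𝕜 𝕜'] {f : 𝕜 → 𝕜'} {a : 𝕜'}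

lemma hasDerivAt_inv_pow {x : 𝕜} (hf : HasDerivAt f a x) (hx : f x ≠ 0) (j : ℕ) :
    HasDerivAt (fun y => (f y)⁻¹ ^ j) (-a * j * (f x)⁻¹ ^ (j + 1)) x := by
  refine ((hf.fun_inv hx).fun_pow j).congr_deriv ?_
  cases j with
  | zero => simp
  | succ j =>
    rw [Nat.add_sub_cancel, div_eq_mul_inv, ← inv_pow]
    ring

lemma iteratedDeriv_inv_pow_of_const_deriv (hf : ∀ y, HasDerivAt f a y) (hne : ∀ y, f y ≠ 0)
    (j m : ℕ) :
    iteratedDeriv m (fun y => (f y)⁻¹ ^ j) =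
      fun y => (-a) ^ m * j.ascFactorial m * (f y)⁻¹ ^ (j + m) := by
  induction m with
  | zero => simp
  | succ m ih =>
    funext y
    rw [iteratedDeriv_succ, ih,
      ((hasDerivAt_inv_pow (hf y) (hne y) (j + m)).const_mul _).deriv, Nat.ascFactorial_succ]
    push_cast
    ring

end AffineInverse

section Higgins

open Complex
open scoped Nat

lemma I_mul_ofReal_add_one_ne_zero (x : ℝ) : I * (x : ℂ) + 1 ≠ 0 := fun h => by
  simpa using congrArg re h

lemma hasDerivAt_I_mul_ofReal_add_one (x : ℝ) : HasDerivAt (fun y : ℝ => I * (y : ℂ) + 1) I x := by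
  simpa using ((ofRealCLM.hasDerivAt (x := x)).const_mul I).add_const 1

lemma higgins_natCast_eq_sum (n : ℕ) :
    higgins n = fun x : ℝ =>
      ∑ k ∈ range (n + 1), (n.choose k * (-2) ^ k : ℂ) * (I * (x : ℂ) + 1)⁻¹ ^ k := by
  funext x
  have hw := I_mul_ofReal_add_one_ne_zero x
  have hmoebius : (I * (x : ℂ) - 1) / (I * x + 1) = -2 * (I * (x : ℂ) + 1)⁻¹ + 1 := by
    field_simp
    ring
  rw [higgins, hmoebius, zpow_natCast, add_pow]
  refine sum_congr rfl fun k _ => ?_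
  rw [mul_pow, one_pow]
  ring

lemma iteratedDeriv_higgins_eq_sum (n m : ℕ) (x : ℝ) :
    iteratedDeriv m (higgins n) x =
      ∑ k ∈ range (n + 1), (n.choose k * (-2) ^ k : ℂ) *
        ((-I) ^ m * k.ascFactorial m * (I * (x : ℂ) + 1)⁻¹ ^ (k + m)) := by
  have hsmooth (k : ℕ) : ContDiff ℝ m fun y : ℝ => (I * (y : ℂ) + 1)⁻¹ ^ k :=
    ((contDiff_const.mul ofRealCLM.contDiff).add contDiff_const).inv
      I_mul_ofReal_add_one_ne_zero |>.pow k
  rw [higgins_natCast_eq_sum,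
    iteratedDeriv_fun_sum fun k _ => (contDiff_const.mul (hsmooth k)).contDiffAt]
  refine sum_congr rfl fun k _ => ?_
  rw [iteratedDeriv_const_mul _ (hsmooth k).contDiffAt,
    iteratedDeriv_inv_pow_of_const_deriv hasDerivAt_I_mul_ofReal_add_one
      I_mul_ofReal_add_one_ne_zero]

lemma iteratedDeriv_higgins (n : ℕ) {m : ℕ} (hm : m ≠ 0) (x : ℝ) :
    iteratedDeriv m (higgins n) x =
      -(2 * (-I) ^ m * m ! / (I * (x : ℂ) + 1) ^ (m + 1)) *
        ∑ k ∈ range n,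
          gbinom n (k + 1) * gbinom (-((m : ℂ) + 1)) k * (2 / (I * (x : ℂ) + 1)) ^ k := by
  have hconst : Nat.ascFactorial 0 m = 0 := by
    obtain ⟨m, rfl⟩ := Nat.exists_eq_succ_of_ne_zero hm
    exact Nat.zero_ascFactorial m
  have hrising (k : ℕ) : ((k + 1).ascFactorial m : ℂ) = m ! * (m + k).choose k := by
    rw [Nat.ascFactorial_eq_factorial_mul_choose, add_comm k m, Nat.choose_symm_add]
    push_cast
    rfl
  rw [iteratedDeriv_higgins_eq_sum, sum_range_succ', hconst, mul_sum]
  simp only [Nat.cast_zero, mul_zero, zero_mul, add_zero]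
  refine sum_congr rfl fun k _ => ?_
  rw [hrising, gbinom_natCast, gbinom_neg_natCast_add_one, div_eq_mul_inv,
    div_eq_mul_inv 2, mul_pow, ← inv_pow, neg_pow 2]
  ring

theorem fracLap_higgins_alpha_two_general (n : ℕ) {p : ℕ} (hp : p ≠ 0) (x : ℝ) :
    -(2 * (Real.Gamma (2 * p + 1) : ℂ) / (I * (x : ℂ) + 1) ^ (2 * p + 1)) *
        ∑ k ∈ range n,
          gbinom n (k + 1) * gbinom (-(2 * (p : ℂ) + 1)) k * (2 / (I * (x : ℂ) + 1)) ^ k =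
      (-1) ^ p * iteratedDeriv (2 * p) (higgins n) x := by
  have hGamma : Real.Gamma (2 * p + 1) = (2 * p)! := mod_cast Real.Gamma_nat_eq_factorial (2 * p)
  have hI : (-I) ^ (2 * p) = (-1 : ℂ) ^ p := by rw [pow_mul, neg_sq, I_sq]
  rw [iteratedDeriv_higgins n (mul_ne_zero two_ne_zero hp), hI, hGamma, ofReal_natCast]
  push_cast
  obtain hsign | hsign := neg_one_pow_eq_or ℂ p <;>
    rw [hsign] <;>
    ring

end Higgins

theorem fracLap_higgins_alpha_two (n : ℕ) (hn : 1 ≤ n) (x : ℝ) :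
    -(2 * (Real.Gamma 3 : ℂ) / (Complex.I * (x : ℂ) + 1) ^ (3 : ℕ)) *
        ∑ k ∈ Finset.range n,
          gbinom (n : ℂ) (k + 1) * gbinom (-3 : ℂ) k *
            (2 / (Complex.I * (x : ℂ) + 1)) ^ k =
      -iteratedDeriv 2 (higgins (n : ℤ)) x := by
  simpa only [Nat.cast_one, mul_one, pow_one, neg_one_mul, two_add_one_eq_three] using
    fracLap_higgins_alpha_two_general n one_ne_zero x
end

section
/- Let n ∈ ℕ (n ≥ 0) and x ∈ ℝ. Then the function y ↦ (μ_n'(x−y) − μ_n'(x+y))/y is absolutely integrable on (0,∞), and (1/π)·∫₀^∞ (μ_n'(x−y) − μ_n'(x+y))/y dy = i·μ_n'(x). (This is the case α = 1 of the fractional Laplacian of the Christov function, i.e. (−Δ)^(1/2)μ_n = i·sgn(n+1/2)·μ_n'; note c_1/1 = 1/π.) -/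
open MeasureTheory Finset

/-!
The operator `f ↦ (1/π) ∫₀^∞ (f(x−y) − f(x+y))/y dy` is the Hilbert transform `H`, which acts as
multiplication by `i` on decaying functions holomorphic in the lower half-plane. With
`u(t) = 1/(t−i)` the Christov function is `μ_n = −i u (1 + 2iu)^n` for `n ≥ 0`, so that `μ_n'` is a
polynomial in `u` without constant term, and it is enough to compute `H` on the powers of
`u(t) = 1/(t−p)`, where `Im p > 0`. For the first power the integral is elementary. Passing from `f`
to `u f` multiplies the value at `x` by `u(x)` as soon as `∫ u f = 0`, which holds for every further
power because `u^k` has a primitive vanishing at `±∞` for `k ≥ 2`. Finally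
`μ_{−n−1} = −conj μ_n` reduces the negative indices to the nonnegative ones.
-/

open Filter Topology Polynomial

section InverseLinear

variable {p : ℂ}

lemma ofReal_sub_ne_zero (hp : p.im ≠ 0) (t : ℝ) : (t : ℂ) - p ≠ 0 := fun h ↦
  hp (by simpa using congrArg Complex.im h)

lemma norm_inv_ofReal_sub_le (hp : p.im ≠ 0) (t : ℝ) : ‖((t : ℂ) - p)⁻¹‖ ≤ |p.im|⁻¹ := by
  rw [norm_inv]
  exact inv_anti₀ (abs_pos.mpr hp) (by simpa using Complex.abs_im_le_norm ((t : ℂ) - p))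

lemma continuous_inv_ofReal_sub (hp : p.im ≠ 0) : Continuous fun t : ℝ ↦ ((t : ℂ) - p)⁻¹ :=
  (Complex.continuous_ofReal.sub continuous_const).inv₀ (ofReal_sub_ne_zero hp)

lemma hasDerivAt_inv_ofReal_sub (hp : p.im ≠ 0) (t : ℝ) :
    HasDerivAt (fun t : ℝ ↦ ((t : ℂ) - p)⁻¹) (-((t : ℂ) - p)⁻¹ ^ 2) t := by
  refine (((hasDerivAt_id t).ofReal_comp.sub_const p).fun_inv
    (ofReal_sub_ne_zero hp t)).congr_deriv ?_
  simp [neg_div]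

lemma hasDerivAt_eval_inv_ofReal_sub (hp : p.im ≠ 0) (P : ℂ[X]) (t : ℝ) :
    HasDerivAt (fun t : ℝ ↦ P.eval ((t : ℂ) - p)⁻¹)
      (P.derivative.eval ((t : ℂ) - p)⁻¹ * -((t : ℂ) - p)⁻¹ ^ 2) t :=
  (P.hasDerivAt _).comp t (hasDerivAt_inv_ofReal_sub hp t)

lemma tendsto_inv_ofReal_sub_cobounded (p : ℂ) :
    Tendsto (fun t : ℝ ↦ ((t : ℂ) - p)⁻¹) (Bornology.cobounded ℝ) (𝓝 0) :=
  tendsto_inv₀_cobounded.comp <| (tendsto_sub_const_cobounded p).comp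
    (RCLike.tendsto_ofReal_cobounded_cobounded ℂ)

lemma memLp_two_inv_ofReal_sub (hp : p.im ≠ 0) :
    MemLp (fun t : ℝ ↦ ((t : ℂ) - p)⁻¹) 2 := by
  rw [memLp_two_iff_integrable_sq_norm (continuous_inv_ofReal_sub hp).aestronglyMeasurable]
  have h := (ProbabilityTheory.integrable_cauchyPDFReal p.re (γ := Real.nnabs p.im)).const_mul
    (Real.pi / |p.im|)
  refine h.congr (Eventually.of_forall fun t ↦ ?_)
  have hp' : |p.im| ≠ 0 := abs_ne_zero.mpr hp
  have hnorm : ‖(t : ℂ) - p‖ ^ 2 = (t - p.re) ^ 2 + p.im ^ 2 := by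
    rw [Complex.sq_norm, Complex.normSq_apply]
    simp [sq]
  simp only [ProbabilityTheory.cauchyPDFReal, Real.coe_nnabs, sq_abs, norm_inv, inv_pow, hnorm]
  field_simp

lemma integrable_inv_ofReal_sub_pow (hp : p.im ≠ 0) (k : ℕ) :
    Integrable fun t : ℝ ↦ ((t : ℂ) - p)⁻¹ ^ (k + 2) := by
  have hsq := (memLp_two_inv_ofReal_sub hp).integrable_mul (memLp_two_inv_ofReal_sub hp)
  refine (hsq.bdd_mul ((continuous_inv_ofReal_sub hp).pow k).aestronglyMeasurable
    (c := |p.im|⁻¹ ^ k) (Eventually.of_forall fun t ↦ ?_)).congr (Eventually.of_forall fun t ↦ ?_)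
  · rw [Pi.pow_apply, norm_pow]
    exact pow_le_pow_left₀ (norm_nonneg _) (norm_inv_ofReal_sub_le hp t) k
  · simp only [Pi.mul_apply, Pi.pow_apply]
    ring

lemma integral_inv_ofReal_sub_pow (hp : p.im ≠ 0) (k : ℕ) :
    ∫ t : ℝ, ((t : ℂ) - p)⁻¹ ^ (k + 2) = 0 := by
  have hk : (k : ℂ) + 1 ≠ 0 := Nat.cast_add_one_ne_zero k
  have hderiv (t : ℝ) : HasDerivAt (fun t : ℝ ↦ -((k : ℂ) + 1)⁻¹ * ((t : ℂ) - p)⁻¹ ^ (k + 1))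
      (((t : ℂ) - p)⁻¹ ^ (k + 2)) t := by
    refine (((hasDerivAt_inv_ofReal_sub hp t).fun_pow (k + 1)).const_mul _).congr_deriv ?_
    rw [Nat.add_sub_cancel]
    push_cast
    linear_combination ((t : ℂ) - p)⁻¹ ^ (k + 2) * inv_mul_cancel₀ hk
  have hlim : Tendsto (fun t : ℝ ↦ -((k : ℂ) + 1)⁻¹ * ((t : ℂ) - p)⁻¹ ^ (k + 1))
      (Bornology.cobounded ℝ) (𝓝 0) := by
    simpa using ((tendsto_inv_ofReal_sub_cobounded p).pow (k + 1)).const_mul (-((k : ℂ) + 1)⁻¹)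
  rw [integral_of_hasDerivAt_of_tendsto hderiv (integrable_inv_ofReal_sub_pow hp k)
    (hlim.mono_left IsOrderBornology.atBot_le_cobounded)
    (hlim.mono_left IsOrderBornology.atTop_le_cobounded), sub_zero]

end InverseLinear

section InvSqAddSq

lemma tendsto_log_add_mul_sub_log_atTop {c : ℂ} (hc : c ∈ Complex.slitPlane) (w : ℂ) :
    Tendsto (fun y : ℝ ↦ Complex.log (w + y * c) - Real.log y) atTop (𝓝 (Complex.log c)) := by
  have hlim : Tendsto (fun y : ℝ ↦ (y : ℂ)⁻¹ * w + c) atTop (𝓝 c) := by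
    simpa using ((tendsto_inv₀_cobounded.comp
      (RCLike.tendsto_ofReal_atTop_cobounded ℂ)).mul_const w).add_const c
  refine (hlim.clog hc).congr' ?_
  filter_upwards [eventually_gt_atTop 0, hlim.eventually_ne (Complex.slitPlane_ne_zero hc)]
    with y hy hne
  have hy' : (y : ℂ) ≠ 0 := Complex.ofReal_ne_zero.mpr hy.ne'
  have hfactor : w + y * c = y * ((y : ℂ)⁻¹ * w + c) := by field_simp
  rw [hfactor, Complex.log_ofReal_mul hy hne, add_sub_cancel_left]

lemma sq_add_sq_eq_mul_I_mul_neg_I (w z : ℂ) :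
    w ^ 2 + z ^ 2 = (w + z * Complex.I) * (w + z * -Complex.I) := by
  linear_combination z ^ 2 * Complex.I_sq

variable {w : ℂ}

lemma add_ofReal_mul_mem_slitPlane {c : ℂ} (hw : 0 < w.re) (hc : c.re = 0) (y : ℝ) :
    w + y * c ∈ Complex.slitPlane :=
  Complex.mem_slitPlane_iff.mpr (Or.inl (by simpa [hc] using hw))

lemma integrable_inv_sq_add_sq (hw : w.re ≠ 0) :
    Integrable fun y : ℝ ↦ (w ^ 2 + (y : ℂ) ^ 2)⁻¹ := by
  have hminus : MemLp (fun y : ℝ ↦ ((y : ℂ) - w * Complex.I)⁻¹) 2 :=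
    memLp_two_inv_ofReal_sub (by simpa using hw)
  have hplus : MemLp (fun y : ℝ ↦ ((y : ℂ) - -(w * Complex.I))⁻¹) 2 :=
    memLp_two_inv_ofReal_sub (by simpa using hw)
  refine (hminus.integrable_mul hplus).congr (Eventually.of_forall fun y ↦ ?_)
  simp only [Pi.mul_apply, ← mul_inv]
  congr 1
  linear_combination -w ^ 2 * Complex.I_sq

lemma hasDerivAt_log_add_mul {c : ℂ} {y : ℝ} (h : w + y * c ∈ Complex.slitPlane) :
    HasDerivAt (fun y : ℝ ↦ Complex.log (w + y * c)) (c / (w + y * c)) y := by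
  simpa using (((hasDerivAt_id y).ofReal_comp.mul_const c).const_add w).clog_real h

lemma integral_Ioi_inv_sq_add_sq (hw : 0 < w.re) :
    ∫ y in Set.Ioi (0 : ℝ), (w ^ 2 + (y : ℂ) ^ 2)⁻¹ = Real.pi / (2 * w) := by
  have hw₀ : w ≠ 0 := by rintro rfl; simp at hw
  have hderiv (y : ℝ) : HasDerivAt (fun y : ℝ ↦ (2 * w * Complex.I)⁻¹ *
      (Complex.log (w + y * Complex.I) - Complex.log (w + y * -Complex.I)))
      (w ^ 2 + (y : ℂ) ^ 2)⁻¹ y := by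
    have hplus := add_ofReal_mul_mem_slitPlane hw Complex.I_re y
    have hminus := add_ofReal_mul_mem_slitPlane (c := -Complex.I) hw (by simp) y
    refine (((hasDerivAt_log_add_mul hplus).sub
      (hasDerivAt_log_add_mul hminus)).const_mul _).congr_deriv ?_
    have hplus₀ := Complex.slitPlane_ne_zero hplus
    have hminus₀ := Complex.slitPlane_ne_zero hminus
    have hsum : (w + y * Complex.I) + (w + y * -Complex.I) = 2 * w := by ring
    rw [sq_add_sq_eq_mul_I_mul_neg_I]
    generalize w + y * Complex.I = a, w + y * -Complex.I = b at *
    field_simp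
    linear_combination hsum
  have hlim : Tendsto (fun y : ℝ ↦ (2 * w * Complex.I)⁻¹ *
      (Complex.log (w + y * Complex.I) - Complex.log (w + y * -Complex.I))) atTop
      (𝓝 (Real.pi / (2 * w))) := by
    have hI := tendsto_log_add_mul_sub_log_atTop (c := Complex.I)
      (by simp [Complex.mem_slitPlane_iff]) w
    have hnegI := tendsto_log_add_mul_sub_log_atTop (c := -Complex.I)
      (by simp [Complex.mem_slitPlane_iff]) w
    convert (hI.sub hnegI).const_mul (2 * w * Complex.I)⁻¹ using 2
    · ring
    · rw [Complex.log_I, Complex.log_neg_I]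
      field_simp
      ring
  rw [integral_Ioi_of_hasDerivAt_of_tendsto' (fun y _ ↦ hderiv y)
    (integrable_inv_sq_add_sq hw.ne').integrableOn hlim]
  simp

end InvSqAddSq

lemma integral_Ioi_sub_add_comp_add {E : Type*} [NormedAddCommGroup E] [NormedSpace ℝ E]
    {f : ℝ → E} (hf : Integrable f) (x : ℝ) :
    ∫ y in Set.Ioi (0 : ℝ), (f (x - y) + f (x + y)) = ∫ t, f t := by
  have hadd : Integrable fun y ↦ f (x + y) := hf.comp_add_left x
  have hreflect : ∫ y in Set.Ioi (0 : ℝ), f (x - y) = ∫ y in Set.Iic (0 : ℝ), f (x + y) := by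
    simpa [sub_eq_add_neg] using integral_comp_neg_Ioi 0 fun y ↦ f (x + y)
  rw [integral_add (hf.comp_sub_left x).integrableOn hadd.integrableOn, hreflect,
    intervalIntegral.integral_Iic_add_Ioi hadd.integrableOn hadd.integrableOn,
    integral_add_left_eq_self f x]

/-- `HasHilbertTransformAt f x v` says that the Hilbert transform `(1/π) p.v. ∫ f(t)/(x−t) dt` of
`f` at `x` equals `v`. The principal value is encoded by folding the integral at `t = x`, and the
folded integrand is required to be absolutely integrable. -/
def HasHilbertTransformAt (f : ℝ → ℂ) (x : ℝ) (v : ℂ) : Prop :=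
  IntegrableOn (fun y : ℝ ↦ (f (x - y) - f (x + y)) / (y : ℂ)) (Set.Ioi 0) ∧
    (1 / (Real.pi : ℂ)) * ∫ y in Set.Ioi (0 : ℝ), (f (x - y) - f (x + y)) / (y : ℂ) = v

namespace HasHilbertTransformAt

variable {f g : ℝ → ℂ} {x : ℝ} {v w : ℂ}

lemma add (hf : HasHilbertTransformAt f x v) (hg : HasHilbertTransformAt g x w) :
    HasHilbertTransformAt (fun t ↦ f t + g t) x (v + w) := by
  have hsplit (y : ℝ) : (f (x - y) + g (x - y) - (f (x + y) + g (x + y))) / (y : ℂ) =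
      (f (x - y) - f (x + y)) / (y : ℂ) + (g (x - y) - g (x + y)) / (y : ℂ) := by ring
  simp only [HasHilbertTransformAt, hsplit]
  exact ⟨hf.1.add hg.1, by rw [integral_add hf.1 hg.1, mul_add, hf.2, hg.2]⟩

lemma const_mul (c : ℂ) (hf : HasHilbertTransformAt f x v) :
    HasHilbertTransformAt (fun t ↦ c * f t) x (c * v) := by
  simp only [HasHilbertTransformAt, ← mul_sub, mul_div_assoc]
  exact ⟨hf.1.const_mul c, by rw [integral_const_mul, mul_left_comm, hf.2]⟩

lemma conj (hf : HasHilbertTransformAt f x v) :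
    HasHilbertTransformAt (fun t ↦ starRingEnd ℂ (f t)) x (starRingEnd ℂ v) := by
  have hconj (y : ℝ) : (starRingEnd ℂ (f (x - y)) - starRingEnd ℂ (f (x + y))) / (y : ℂ) =
      starRingEnd ℂ ((f (x - y) - f (x + y)) / (y : ℂ)) := by simp
  simp only [HasHilbertTransformAt, hconj]
  exact ⟨Complex.conjCLE.toContinuousLinearMap.integrable_comp hf.1,
    by rw [integral_conj, ← hf.2]; simp⟩

lemma inv_ofReal_sub_mul {p : ℂ} (hp : p.im ≠ 0) (hf : HasHilbertTransformAt f x v)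
    (hint : Integrable fun t : ℝ ↦ ((t : ℂ) - p)⁻¹ * f t) :
    HasHilbertTransformAt (fun t ↦ ((t : ℂ) - p)⁻¹ * f t) x
      (((x : ℂ) - p)⁻¹ * (v + 1 / Real.pi * ∫ t : ℝ, ((t : ℂ) - p)⁻¹ * f t)) := by
  set g : ℝ → ℂ := fun t ↦ ((t : ℂ) - p)⁻¹ * f t with hg
  have hsum : IntegrableOn (fun y ↦ g (x - y) + g (x + y)) (Set.Ioi 0) :=
    ((hint.comp_sub_left x).add (hint.comp_add_left x)).integrableOn
  have hfold : Set.EqOn (fun y : ℝ ↦ ((x : ℂ) - p)⁻¹ *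
      ((f (x - y) - f (x + y)) / (y : ℂ) + (g (x - y) + g (x + y))))
      (fun y : ℝ ↦ (g (x - y) - g (x + y)) / (y : ℂ)) (Set.Ioi 0) := by
    intro y hy
    have hy₀ : (y : ℂ) ≠ 0 := Complex.ofReal_ne_zero.mpr hy.ne'
    have hx := ofReal_sub_ne_zero hp x
    have hfg (t : ℝ) : f t = ((t : ℂ) - p) * g t := by
      rw [hg, mul_inv_cancel_left₀ (ofReal_sub_ne_zero hp t)]
    simp only [hfg]
    push_cast
    field_simp
    ring
  refine ⟨IntegrableOn.congr_fun ((hf.1.add hsum).const_mul _) hfold measurableSet_Ioi, ?_⟩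
  rw [← setIntegral_congr_fun measurableSet_Ioi hfold, integral_const_mul,
    integral_add hf.1 hsum, integral_Ioi_sub_add_comp_add hint, ← hf.2]
  ring

end HasHilbertTransformAt

section UpperHalfPlane

variable {p : ℂ}

lemma hasHilbertTransformAt_inv_ofReal_sub (hp : 0 < p.im) (x : ℝ) :
    HasHilbertTransformAt (fun t ↦ ((t : ℂ) - p)⁻¹) x (Complex.I * ((x : ℂ) - p)⁻¹) := by
  set w : ℂ := Complex.I * ((x : ℂ) - p) with hw
  have hw_re : 0 < w.re := by simpa [hw] using hp
  have hfold : Set.EqOn (fun y : ℝ ↦ -2 * (w ^ 2 + (y : ℂ) ^ 2)⁻¹)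
      (fun y : ℝ ↦ ((((x - y : ℝ) : ℂ) - p)⁻¹ - (((x + y : ℝ) : ℂ) - p)⁻¹) / (y : ℂ))
      (Set.Ioi 0) := by
    intro y hy
    have hy₀ : (y : ℂ) ≠ 0 := Complex.ofReal_ne_zero.mpr hy.ne'
    have hminus := ofReal_sub_ne_zero hp.ne' (x - y)
    have hplus := ofReal_sub_ne_zero hp.ne' (x + y)
    have hfactor : w ^ 2 + (y : ℂ) ^ 2 =
        -((((x - y : ℝ) : ℂ) - p) * (((x + y : ℝ) : ℂ) - p)) := by
      rw [hw]
      push_cast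
      linear_combination ((x : ℂ) - p) ^ 2 * Complex.I_sq
    simp only [hfactor]
    field_simp
    push_cast
    ring
  refine ⟨((integrable_inv_sq_add_sq hw_re.ne').const_mul _).integrableOn.congr_fun hfold
    measurableSet_Ioi, ?_⟩
  have hx := ofReal_sub_ne_zero hp.ne' x
  have hpi : (Real.pi : ℂ) ≠ 0 := Complex.ofReal_ne_zero.mpr Real.pi_ne_zero
  rw [← setIntegral_congr_fun measurableSet_Ioi hfold, integral_const_mul,
    integral_Ioi_inv_sq_add_sq hw_re, hw]
  field_simp
  simp

lemma hasHilbertTransformAt_inv_ofReal_sub_pow (hp : 0 < p.im) (k : ℕ) (x : ℝ) :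
    HasHilbertTransformAt (fun t ↦ ((t : ℂ) - p)⁻¹ ^ (k + 1)) x
      (Complex.I * ((x : ℂ) - p)⁻¹ ^ (k + 1)) := by
  induction k with
  | zero => simpa using hasHilbertTransformAt_inv_ofReal_sub hp x
  | succ k ih =>
    have hsucc (t : ℝ) : ((t : ℂ) - p)⁻¹ * ((t : ℂ) - p)⁻¹ ^ (k + 1) =
        ((t : ℂ) - p)⁻¹ ^ (k + 2) := (pow_succ' _ _).symm
    have h := ih.inv_ofReal_sub_mul hp.ne'
      (by simpa only [hsucc] using integrable_inv_ofReal_sub_pow hp.ne' k)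
    simp only [hsucc, integral_inv_ofReal_sub_pow hp.ne', mul_zero, add_zero] at h
    rwa [mul_left_comm, hsucc] at h

lemma hasHilbertTransformAt_eval_X_mul (hp : 0 < p.im) (P : ℂ[X]) (x : ℝ) :
    HasHilbertTransformAt (fun t ↦ (X * P).eval ((t : ℂ) - p)⁻¹) x
      (Complex.I * (X * P).eval ((x : ℂ) - p)⁻¹) := by
  induction P using Polynomial.induction_on' with
  | add P Q hP hQ => simpa only [mul_add, eval_add] using hP.add hQ
  | monomial k c =>
    have h := (hasHilbertTransformAt_inv_ofReal_sub_pow hp k x).const_mul c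
    simpa only [X_mul_monomial, eval_monomial, mul_left_comm c] using h

lemma hasHilbertTransformAt_deriv_eval (hp : 0 < p.im) (P : ℂ[X]) (x : ℝ) :
    HasHilbertTransformAt (deriv fun t : ℝ ↦ P.eval ((t : ℂ) - p)⁻¹) x
      (Complex.I * deriv (fun t : ℝ ↦ P.eval ((t : ℂ) - p)⁻¹) x) := by
  have hderiv : (deriv fun t : ℝ ↦ P.eval ((t : ℂ) - p)⁻¹) =
      fun t : ℝ ↦ (X * (-X * derivative P)).eval ((t : ℂ) - p)⁻¹ := by
    ext t
    rw [(hasDerivAt_eval_inv_ofReal_sub hp.ne' P t).deriv]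
    simp only [eval_mul, eval_neg, eval_X]
    ring
  rw [hderiv]
  exact hasHilbertTransformAt_eval_X_mul hp _ x

end UpperHalfPlane

section Christov

lemma I_mul_ofReal_add_one_ne_zero_s17 (t : ℝ) : Complex.I * (t : ℂ) + 1 ≠ 0 := fun h ↦ by
  simpa using congrArg Complex.re h

lemma I_mul_ofReal_sub_one_ne_zero (t : ℝ) : Complex.I * (t : ℂ) - 1 ≠ 0 := fun h ↦ by
  simpa using congrArg Complex.re h

lemma christov_eq_higgins_div (n : ℤ) (t : ℝ) :
    christov n t = higgins n t / (Complex.I * t + 1) := by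
  rw [christov, higgins, zpow_add_one₀ (I_mul_ofReal_add_one_ne_zero_s17 t), div_mul_eq_div_div,
    div_zpow]

lemma christov_natCast_eq_eval (n : ℕ) :
    christov n = fun t : ℝ ↦ (C (-Complex.I) * X * (1 + C (2 * Complex.I) * X) ^ n).eval
      ((t : ℂ) - Complex.I)⁻¹ := by
  ext t
  have ht : (t : ℂ) - Complex.I ≠ 0 := ofReal_sub_ne_zero (by simp) t
  have hden : Complex.I * t + 1 = Complex.I * ((t : ℂ) - Complex.I) := by
    linear_combination Complex.I_sq
  have hratio : (Complex.I * t - 1) / (Complex.I * t + 1) =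
      1 + 2 * Complex.I * ((t : ℂ) - Complex.I)⁻¹ := by
    rw [div_eq_iff (I_mul_ofReal_add_one_ne_zero_s17 t), hden]
    field_simp
    linear_combination -Complex.I_sq
  rw [christov_eq_higgins_div, higgins, hratio, zpow_natCast, hden, div_eq_mul_inv, mul_inv,
    Complex.inv_I]
  simp only [eval_mul, eval_pow, eval_add, eval_C, eval_X, eval_one]
  ring

lemma christov_neg_sub_one (n : ℤ) :
    christov (-n - 1) = fun t ↦ -starRingEnd ℂ (christov n t) := by
  ext t
  have hplus : starRingEnd ℂ (Complex.I * t + 1) = -(Complex.I * t - 1) := by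
    simp only [map_add, map_mul, Complex.conj_I, Complex.conj_ofReal, map_one]
    ring
  have hminus : starRingEnd ℂ (Complex.I * t - 1) = -(Complex.I * t + 1) := by
    simp only [map_sub, map_mul, Complex.conj_I, Complex.conj_ofReal, map_one]
    ring
  have ha := I_mul_ofReal_sub_one_ne_zero t
  have hb := I_mul_ofReal_add_one_ne_zero_s17 t
  rw [christov_eq_higgins_div, christov_eq_higgins_div, higgins, higgins, map_div₀, map_zpow₀,
    map_div₀, hplus, hminus, neg_div_neg_eq, ← neg_add', zpow_neg, ← inv_zpow, inv_div,
    zpow_add_one₀ (div_ne_zero hb ha)]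
  field_simp

lemma christov'_neg_sub_one (n : ℤ) :
    christov' (-n - 1) = fun t ↦ -starRingEnd ℂ (christov' n t) := by
  ext t
  rw [christov', christov_neg_sub_one, deriv.fun_neg]
  exact congrArg Neg.neg deriv.star

lemma hasHilbertTransformAt_christov'_natCast (n : ℕ) (x : ℝ) :
    HasHilbertTransformAt (christov' n) x (Complex.I * christov' n x) := by
  have h := hasHilbertTransformAt_deriv_eval (p := Complex.I) (by simp)
    (C (-Complex.I) * X * (1 + C (2 * Complex.I) * X) ^ n) x
  rwa [← christov_natCast_eq_eval] at h

end Christov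

theorem fracLap_christov_alpha_one_general (n : ℤ) (x : ℝ) :
    IntegrableOn (fun y : ℝ =>
        (christov' n (x - y) - christov' n (x + y)) / (y : ℂ)) (Set.Ioi 0) ∧
    (1 / (Real.pi : ℂ)) *
        ∫ y in Set.Ioi (0 : ℝ), (christov' n (x - y) - christov' n (x + y)) / (y : ℂ) =
      Complex.I * (2 * n + 1).sign * christov' n x := by
  change HasHilbertTransformAt (christov' n) x _
  obtain ⟨m, rfl | rfl⟩ : ∃ m : ℕ, n = m ∨ n = -m - 1 :=
    ⟨(max n (-n - 1)).toNat, by omega⟩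
  · have hsign : (2 * (m : ℤ) + 1).sign = 1 := Int.sign_eq_one_of_pos (by omega)
    simpa [hsign] using hasHilbertTransformAt_christov'_natCast m x
  · have hsign : (2 * (-(m : ℤ) - 1) + 1).sign = -1 := Int.sign_eq_neg_one_of_neg (by omega)
    simpa [hsign, christov'_neg_sub_one] using
      ((hasHilbertTransformAt_christov'_natCast m x).conj).const_mul (-1)

theorem fracLap_christov_alpha_one (n : ℕ) (x : ℝ) :
    IntegrableOn (fun y : ℝ =>
        (christov' (n : ℤ) (x - y) - christov' (n : ℤ) (x + y)) / (y : ℂ)) (Set.Ioi 0) ∧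
    (1 / (Real.pi : ℂ)) *
        ∫ y in Set.Ioi (0 : ℝ),
          (christov' (n : ℤ) (x - y) - christov' (n : ℤ) (x + y)) / (y : ℂ) =
      Complex.I * christov' (n : ℤ) x := by
  have hsign : (2 * (n : ℤ) + 1).sign = 1 := Int.sign_eq_one_of_pos (by omega)
  simpa [hsign] using fracLap_christov_alpha_one_general n x
end
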